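/- arXiv:2511.12157 — 4 statements merged into one kernel-verified Lean document; each statement's English description precedes it below -/
import Mathlib

section
/- Let G : ℝ^M → ℝ be differentiable and ν-strongly convex for some ν > 0, and let A ∈ ℝ^{M×N} satisfy the LRIP at order K with constant δ < 1. Then F := G∘A satisfies the restricted strong convexity property with constant ν(1−δ): for all x, x' ∈ ℝ^N with ‖x − x'‖₀ ≤ K, one has ⟨∇F(x) − ∇F(x'), x − x'⟩ ≥ ν(1−δ)‖x − x'‖₂². -/
open Classical

noncomputable section

/-- `‖x‖₀`: the number of nonzero entries of a vector. -/
def norm0 {ι : Type*} [Fintype ι] (x : ι → ℝ) : ℕ :=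
  (Finset.univ.filter fun i => x i ≠ 0).card

/-- Euclidean inner product on `ι → ℝ`. -/
def dotp {ι : Type*} [Fintype ι] (x y : ι → ℝ) : ℝ := ∑ i, x i * y i

/-- squared Euclidean norm. -/
def sqnorm {ι : Type*} [Fintype ι] (x : ι → ℝ) : ℝ := ∑ i, (x i) ^ 2

/-- Euclidean norm. -/
def enorm2 {ι : Type*} [Fintype ι] (x : ι → ℝ) : ℝ := Real.sqrt (sqnorm x)

/-- gradient via the Fréchet derivative: `(grad F x) i = ∂F/∂x_i(x)`. -/
def grad {ι : Type*} [Fintype ι] [DecidableEq ι] (F : (ι → ℝ) → ℝ) (x : ι → ℝ) : ι → ℝ :=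
  fun i => fderiv ℝ F x (Pi.single i 1)

/-- `A` satisfies the LRIP at order `K` with constant `δ`: for every index set `ω` with
`#ω ≤ K` and every `u ∈ ℝ^{#ω}`, `‖A_ω u‖₂² ≥ (1-δ)‖u‖₂²`. -/
def LRIP {m n : Type*} [Fintype m] [Fintype n] [DecidableEq n]
    (A : Matrix m n ℝ) (K : ℕ) (δ : ℝ) : Prop :=
  ∀ ω : Finset n, ω.card ≤ K → ∀ u : {i // i ∈ ω} → ℝ,
    (1 - δ) * sqnorm u ≤ sqnorm ((A.submatrix id (fun j : {i // i ∈ ω} => (j : n))).mulVec u)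

/-! Strong convexity along a segment gives a first-order inequality at each endpoint, by letting
the weight of the other endpoint tend to `0`; adding the two inequalities shows that the gradient
is strongly monotone along the segment. The segment from `x'` to `x` is mapped by `A` to a
segment along which `G` has convexity gap `ν / 2 * ‖A (x - x')‖²`. Since `x - x'` is supported on
at most `K` indices, the LRIP bounds this gap below by `ν / 2 * (1 - δ) * ‖x - x'‖²`. -/

section ConvexityGap

open Filter Topology

variable {E : Type*} [AddCommGroup E] [Module ℝ E] {f : E → ℝ} {w v : E} {a b c : ℝ}

lemma hasLineDerivAt_le_of_convexity_gap (hf : HasLineDerivAt ℝ f a v (w - v))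
    (hgap : ∀ t : ℝ, 0 ≤ t → t ≤ 1 →
      f (t • w + (1 - t) • v) ≤ t * f w + (1 - t) * f v - t * (1 - t) * c) :
    a ≤ f w - f v - c := by
  have hslope : Tendsto (fun t : ℝ => t⁻¹ • (f (v + t • (w - v)) - f v)) (𝓝[>] 0) (𝓝 a) :=
    hf.tendsto_slope_zero_right
  have hbound : Tendsto (fun t : ℝ => f w - f v - (1 - t) * c) (𝓝[>] 0) (𝓝 (f w - f v - c)) := by
    have hcont : Continuous fun t : ℝ => f w - f v - (1 - t) * c := by fun_prop
    simpa using (hcont.tendsto 0).mono_left nhdsWithin_le_nhds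
  refine le_of_tendsto_of_tendsto hslope hbound ?_
  filter_upwards [Ioc_mem_nhdsGT zero_lt_one] with t ⟨ht₀, ht₁⟩
  have hcomb : v + t • (w - v) = t • w + (1 - t) • v := by module
  rw [hcomb, smul_eq_mul, inv_mul_le_iff₀ ht₀]
  linarith [hgap t ht₀.le ht₁]

lemma two_mul_le_hasLineDerivAt_sub_of_convexity_gap (hw : HasLineDerivAt ℝ f a w (w - v))
    (hv : HasLineDerivAt ℝ f b v (w - v))
    (hgap : ∀ t : ℝ, 0 ≤ t → t ≤ 1 →
      f (t • w + (1 - t) • v) ≤ t * f w + (1 - t) * f v - t * (1 - t) * c) :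
    2 * c ≤ a - b := by
  have hgap_symm (t : ℝ) (ht₀ : 0 ≤ t) (ht₁ : t ≤ 1) :
      f (t • v + (1 - t) • w) ≤ t * f v + (1 - t) * f w - t * (1 - t) * c := by
    have h := hgap (1 - t) (sub_nonneg.2 ht₁) (sub_le_self 1 ht₀)
    rw [sub_sub_cancel, add_comm] at h
    linarith
  have hw_symm : HasLineDerivAt ℝ f (-a) w (v - w) := by
    simpa using hw.smul (-1)
  have hle_v : b ≤ f w - f v - c := hasLineDerivAt_le_of_convexity_gap hv hgap
  have hle_w : -a ≤ f v - f w - c := hasLineDerivAt_le_of_convexity_gap hw_symm hgap_symm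
  linarith

end ConvexityGap

section Coordinates

variable {ι : Type*} [Fintype ι]

lemma sub_dotp (x y z : ι → ℝ) : dotp (x - y) z = dotp x z - dotp y z :=
  sub_dotProduct x y z

lemma dotp_grad [DecidableEq ι] (F : (ι → ℝ) → ℝ) (x z : ι → ℝ) :
    dotp (grad F x) z = fderiv ℝ F x z := by
  conv_rhs => rw [pi_eq_sum_univ' z, map_sum]
  simp only [dotp, grad, map_smul, smul_eq_mul, mul_comm]

lemma sum_subtype_eq_sum_univ {R : Type*} [AddCommMonoid R] {s : Finset ι}
    [Fintype {i // i ∈ s}] {f : ι → R} (hf : ∀ i ∉ s, f i = 0) :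
    ∑ i : {i // i ∈ s}, f i = ∑ i, f i := by
  rw [← Finset.sum_subtype s (fun _ => Iff.rfl) f]
  exact Finset.sum_subset s.subset_univ fun i _ hi => hf i hi

end Coordinates

section RestrictedStrongConvexity

variable {m n : Type*} [Fintype m] [Fintype n]

lemma LRIP.le_sqnorm_mulVec [DecidableEq n] {A : Matrix m n ℝ} {K : ℕ} {δ : ℝ} (hA : LRIP A K δ)
    {z : n → ℝ} (hz : norm0 z ≤ K) : (1 - δ) * sqnorm z ≤ sqnorm (A.mulVec z) := by
  obtain ⟨ω, hω, hsupp⟩ : ∃ ω : Finset n, ω.card ≤ K ∧ ∀ i ∉ ω, z i = 0 :=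
    ⟨_, hz, fun i hi => by simpa using hi⟩
  have hsq : sqnorm (fun i : {i // i ∈ ω} => z i) = sqnorm z :=
    sum_subtype_eq_sum_univ (f := fun i => z i ^ 2) fun i hi => by simp [hsupp i hi]
  have hmul : (A.submatrix id fun j : {i // i ∈ ω} => (j : n)).mulVec (fun i => z i) =
      A.mulVec z := by
    ext k
    exact sum_subtype_eq_sum_univ (f := fun i => A k i * z i) fun i hi => by simp [hsupp i hi]
  simpa only [hsq, hmul] using hA ω hω fun i => z i

/-- `ν`-strong convexity with respect to the Euclidean norm, the hypothesis on the outer function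
`G`. Mathlib's `StrongConvexOn` would measure `w - v` in the sup norm that `m → ℝ` carries. -/
def IsStronglyConvex (ν : ℝ) (G : (m → ℝ) → ℝ) : Prop :=
  ∀ w v : m → ℝ, ∀ t : ℝ, 0 ≤ t → t ≤ 1 →
    G (t • w + (1 - t) • v) ≤ t * G w + (1 - t) * G v - ν / 2 * t * (1 - t) * sqnorm (w - v)

lemma IsStronglyConvex.comp_mulVec_le {ν : ℝ} {G : (m → ℝ) → ℝ} (hG : IsStronglyConvex ν G)
    (A : Matrix m n ℝ) (x x' : n → ℝ) {t : ℝ} (ht₀ : 0 ≤ t) (ht₁ : t ≤ 1) :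
    G (A.mulVec (t • x + (1 - t) • x')) ≤ t * G (A.mulVec x) + (1 - t) * G (A.mulVec x') -
      t * (1 - t) * (ν / 2 * sqnorm (A.mulVec (x - x'))) := by
  have h := hG (A.mulVec x) (A.mulVec x') t ht₀ ht₁
  rw [Matrix.mulVec_add, Matrix.mulVec_smul, Matrix.mulVec_smul, Matrix.mulVec_sub]
  linarith

lemma IsStronglyConvex.mul_sqnorm_mulVec_le_dotp_grad_sub [DecidableEq n] {ν : ℝ}
    {G : (m → ℝ) → ℝ} (hG : IsStronglyConvex ν G) (A : Matrix m n ℝ) {x x' : n → ℝ}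
    (hx : DifferentiableAt ℝ (fun z => G (A.mulVec z)) x)
    (hx' : DifferentiableAt ℝ (fun z => G (A.mulVec z)) x') :
    ν * sqnorm (A.mulVec (x - x')) ≤
      dotp (grad (fun z => G (A.mulVec z)) x - grad (fun z => G (A.mulVec z)) x') (x - x') := by
  rw [sub_dotp, dotp_grad, dotp_grad]
  have h := two_mul_le_hasLineDerivAt_sub_of_convexity_gap
    (hx.hasFDerivAt.hasLineDerivAt (x - x')) (hx'.hasFDerivAt.hasLineDerivAt (x - x'))
    fun _ ht₀ ht₁ => hG.comp_mulVec_le A x x' ht₀ ht₁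
  linarith

theorem stmt0_general [DecidableEq n] {K : ℕ} {G : (m → ℝ) → ℝ} {ν δ : ℝ} (hν : 0 ≤ ν)
    (hG : IsStronglyConvex ν G) {A : Matrix m n ℝ} (hA : LRIP A K δ) {x x' : n → ℝ}
    (hx : DifferentiableAt ℝ (fun z => G (A.mulVec z)) x)
    (hx' : DifferentiableAt ℝ (fun z => G (A.mulVec z)) x') (hK : norm0 (x - x') ≤ K) :
    ν * (1 - δ) * sqnorm (x - x') ≤
      dotp (grad (fun z => G (A.mulVec z)) x - grad (fun z => G (A.mulVec z)) x') (x - x') :=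
  calc ν * (1 - δ) * sqnorm (x - x')
    _ = ν * ((1 - δ) * sqnorm (x - x')) := mul_assoc _ _ _
    _ ≤ ν * sqnorm (A.mulVec (x - x')) := by gcongr; exact hA.le_sqnorm_mulVec hK
    _ ≤ _ := hG.mul_sqnorm_mulVec_le_dotp_grad_sub A hx hx'

end RestrictedStrongConvexity

/-- if `G` is differentiable and `ν`-strongly convex and `A` satisfies the LRIP
at order `K` with constant `δ < 1`, then `F = G ∘ A` satisfies restricted strong convexity
with constant `ν(1-δ)`. -/
theorem stmt0 {M N : ℕ} (K : ℕ) (G : (Fin M → ℝ) → ℝ) (ν δ : ℝ)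
    (hν : 0 < ν) (hδ : δ < 1)
    (hGdiff : Differentiable ℝ G)
    -- `ν`-strong convexity of `G` (w.r.t. the Euclidean norm)
    (hGsc : ∀ w v : Fin M → ℝ, ∀ t : ℝ, 0 ≤ t → t ≤ 1 →
      G (t • w + (1 - t) • v) ≤ t * G w + (1 - t) * G v - ν / 2 * t * (1 - t) * sqnorm (w - v))
    (A : Matrix (Fin M) (Fin N) ℝ) (hA : LRIP A K δ) :
    ∀ x x' : Fin N → ℝ, norm0 (x - x') ≤ K →
      ν * (1 - δ) * sqnorm (x - x') ≤
        dotp (grad (fun z => G (A.mulVec z)) x - grad (fun z => G (A.mulVec z)) x') (x - x') := by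
  have hF : Differentiable ℝ fun z => G (A.mulVec z) :=
    hGdiff.comp A.mulVecLin.toContinuousLinearMap.differentiable
  exact fun x x' hK => stmt0_general hν.le hGsc hA (hF x) (hF x') hK
end
end

section
/- Let C be ℝ or ℝ_{≥0}, let ψ : C → ℝ be strictly convex, twice differentiable on int(C), with x ↦ ψ'(x)x − ψ(x) coercive and ψ' odd when C = ℝ (ψ'(0) ≥ 0 when C = ℝ_{≥0}); let α > 0 and C_K ∈ (0,1). Suppose x ∈ C and z ∈ ∂h(x) satisfy |z| > (ψ'(α) − ψ'(0))/C_K + ψ'(0). Then for every x' ∈ C with x' ≠ x and every z' ∈ ∂h(x'), one has (z − z')(x − x') > (1 − C_K)(ψ'(x) − ψ'(x'))(x − x'). -/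
open Classical

noncomputable section

/-- the subdifferential `∂h` of `h = β_ψ + ψ` (Clarke subdifferential, closed form). -/
def subdiffH (𝒞 : Set ℝ) (dψ : ℝ → ℝ) (α : ℝ) (t : ℝ) : Set ℝ :=
  if 𝒞 = Set.univ then
    if t = 0 then Set.Icc (-(dψ α)) (dψ α)
    else if |t| ≤ α then {Real.sign t * dψ α}
    else {dψ t}
  else
    if t ≤ α then {dψ α} else {dψ t}

/-!
Where `|t| > α` the set `∂h t` is the singleton `{ψ' t}`, and for `t ≤ α` every `z ∈ ∂h t` satisfies
`z ≤ ψ' α` and exceeds `ψ' t` by at most `ψ' α - ψ' 0`. The lower bound on `z` therefore forces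
`x > α` and `z = ψ' x` (up to reflection when `C = ℝ`), and for `x' ≤ α` a convex combination of the
two bounds with weights `C_K` and `1 - C_K` gives
`z' - (1 - C_K) ψ' x' ≤ C_K ψ' α + (1 - C_K) (ψ' α - ψ' 0) = ψ' α - (1 - C_K) ψ' 0 < C_K z`.
-/

theorem strictMonoOn_of_strictConvexOn_of_hasDerivWithinAt {s : Set ℝ} {f f' : ℝ → ℝ}
    (hf : StrictConvexOn ℝ s f) (hf' : ∀ t ∈ s, HasDerivWithinAt f (f' t) s t) :
    StrictMonoOn f' s := fun a ha b hb hab =>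
  (hf.lt_slope_of_hasDerivWithinAt ha hb hab (hf' a ha)).trans
    (hf.slope_lt_of_hasDerivWithinAt ha hb hab (hf' b hb))

theorem sub_mul_sub_pos_of_strictMonoOn {R : Type*} [Ring R] [LinearOrder R]
    [IsStrictOrderedRing R] {s : Set R} {g : R → R} (hg : StrictMonoOn g s) {x y : R}
    (hx : x ∈ s) (hy : y ∈ s) (hxy : y ≠ x) : 0 < (g x - g y) * (x - y) := by
  rcases hxy.lt_or_gt with h | h
  · exact mul_pos (sub_pos.2 (hg hy hx h)) (sub_pos.2 h)
  · exact mul_pos_of_neg_of_neg (sub_neg.2 (hg hx hy h)) (sub_neg.2 h)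

theorem le_sub_div_add_of_le_one {K : Type*} [Field K] [LinearOrder K] [IsStrictOrderedRing K]
    {a b c : K} (hab : a ≤ b) (hc0 : 0 < c) (hc1 : c ≤ 1) : b ≤ (b - a) / c + a :=
  sub_le_iff_le_add.1 (le_div_self (sub_nonneg.2 hab) hc0 hc1)

section subdiffH

variable {𝒞 : Set ℝ} {g : ℝ → ℝ} {α CK t x x' z z' : ℝ}

theorem subdiffH_univ : subdiffH Set.univ g α t =
    if t = 0 then Set.Icc (-g α) (g α)
    else if |t| ≤ α then {Real.sign t * g α} else {g t} :=
  if_pos rfl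

theorem subdiffH_Ici : subdiffH (Set.Ici 0) g α t = if t ≤ α then {g α} else {g t} :=
  if_neg fun h => not_bddBelow_univ (h ▸ bddBelow_Ici)

theorem subdiffH_of_lt (hα : 0 ≤ α) (ht : α < t) : subdiffH 𝒞 g α t = {g t} := by
  have ht0 : 0 < t := hα.trans_lt ht
  simp only [subdiffH, abs_of_pos ht0, ht0.ne', ht.not_ge, if_false, ite_self]

theorem neg_mem_subdiffH_univ (hodd : ∀ t, g (-t) = -g t) (hz : z ∈ subdiffH Set.univ g α t) :
    -z ∈ subdiffH Set.univ g α (-t) := by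
  rw [subdiffH_univ] at hz ⊢
  simp only [neg_eq_zero, abs_neg, Real.sign_neg, hodd, neg_mul]
  split_ifs at hz ⊢
  · exact ⟨neg_le_neg hz.2, neg_le.1 hz.1⟩
  · exact congrArg Neg.neg hz
  · exact congrArg Neg.neg hz

theorem le_and_sub_le_of_mem_subdiffH_univ (hg : Monotone g) (hodd : ∀ t, g (-t) = -g t)
    (hα : 0 ≤ α) (ht : t ≤ α) (hz : z ∈ subdiffH Set.univ g α t) :
    z ≤ g α ∧ z - g t ≤ g α - g 0 := by
  have hg0 : g 0 = 0 := by simpa [self_eq_neg] using hodd 0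
  have hgα : 0 ≤ g α := hg0 ▸ hg hα
  have hgt : g t ≤ g α := hg ht
  rw [subdiffH_univ] at hz
  split_ifs at hz with ht0 htα
  · subst ht0
    exact ⟨hz.2, sub_le_sub_right hz.2 _⟩
  · rcases lt_or_gt_of_ne ht0 with hneg | hpos
    · obtain rfl : z = -g α := by simpa [Real.sign_of_neg hneg] using hz
      have : -g α ≤ g t := hodd α ▸ hg (neg_le_of_abs_le htα)
      constructor <;> linarith
    · obtain rfl : z = g α := by simpa [Real.sign_of_pos hpos] using hz
      exact ⟨le_rfl, sub_le_sub_left (hg hpos.le) _⟩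
  · obtain rfl : z = g t := hz
    constructor <;> linarith

theorem le_and_sub_le_of_mem_subdiffH (h𝒞 : 𝒞 = Set.univ ∨ 𝒞 = Set.Ici 0) (hg : MonotoneOn g 𝒞)
    (hodd : 𝒞 = Set.univ → ∀ t, g (-t) = -g t) (hα : 0 ≤ α) (ht𝒞 : t ∈ 𝒞) (ht : t ≤ α)
    (hz : z ∈ subdiffH 𝒞 g α t) : z ≤ g α ∧ z - g t ≤ g α - g 0 := by
  rcases h𝒞 with rfl | rfl
  · exact le_and_sub_le_of_mem_subdiffH_univ (monotoneOn_univ.1 hg) (hodd rfl) hα ht hz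
  · obtain rfl : z = g α := by simpa [subdiffH_Ici, ht] using hz
    exact ⟨le_rfl, sub_le_sub_left (hg Set.self_mem_Ici ht𝒞 ht𝒞) _⟩

theorem nonneg_of_mem_subdiffH_Ici (hg : MonotoneOn g (Set.Ici 0)) (hg0 : 0 ≤ g 0) (hα : 0 ≤ α)
    (ht : 0 ≤ t) (hz : z ∈ subdiffH (Set.Ici 0) g α t) : 0 ≤ z := by
  have hnonneg : ∀ s, 0 ≤ s → 0 ≤ g s := fun s hs => hg0.trans (hg Set.self_mem_Ici hs hs)
  rw [subdiffH_Ici] at hz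
  split_ifs at hz <;> obtain rfl := hz
  exacts [hnonneg α hα, hnonneg t ht]

theorem mul_sub_lt_sub_of_mem_subdiffH_of_le (h𝒞 : 𝒞 = Set.univ ∨ 𝒞 = Set.Ici 0)
    (hg : MonotoneOn g 𝒞) (hodd : 𝒞 = Set.univ → ∀ t, g (-t) = -g t) (hα : 0 ≤ α) (hCK0 : 0 < CK)
    (hCK1 : CK ≤ 1) (hbig : (g α - g 0) / CK + g 0 < g x)
    (hx' : x' ∈ 𝒞) (hx'α : x' ≤ α) (hz' : z' ∈ subdiffH 𝒞 g α x') :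
    (1 - CK) * (g x - g x') < g x - z' := by
  obtain ⟨hz'_le, hz'_sub⟩ := le_and_sub_le_of_mem_subdiffH h𝒞 hg hodd hα hx' hx'α hz'
  have hthreshold : g α - g 0 < (g x - g 0) * CK := (div_lt_iff₀ hCK0).1 (lt_sub_iff_add_lt.2 hbig)
  have hcombination : CK * z' + (1 - CK) * (z' - g x') ≤ CK * g α + (1 - CK) * (g α - g 0) :=
    add_le_add (mul_le_mul_of_nonneg_left hz'_le hCK0.le)
      (mul_le_mul_of_nonneg_left hz'_sub (sub_nonneg.2 hCK1))
  linarith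

theorem mul_lt_mul_of_mem_subdiffH_of_lt (h𝒞 : 𝒞 = Set.univ ∨ 𝒞 = Set.Ici 0)
    (hg : StrictMonoOn g 𝒞) (hodd : 𝒞 = Set.univ → ∀ t, g (-t) = -g t) (hα : 0 ≤ α)
    (hCK0 : 0 < CK) (hCK1 : CK ≤ 1) (hx : x ∈ 𝒞) (hz : z ∈ subdiffH 𝒞 g α x)
    (hbig : (g α - g 0) / CK + g 0 < z) (hx' : x' ∈ 𝒞) (hne : x' ≠ x)
    (hz' : z' ∈ subdiffH 𝒞 g α x') :
    (1 - CK) * ((g x - g x') * (x - x')) < (z - z') * (x - x') := by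
  have hgα : g 0 ≤ g α := by
    rcases h𝒞 with rfl | rfl
    exacts [hg.monotoneOn trivial trivial hα, hg.monotoneOn Set.self_mem_Ici hα hα]
  have hαx : α < x := by
    by_contra! hxα
    have hzα : z ≤ g α :=
      (le_and_sub_le_of_mem_subdiffH h𝒞 hg.monotoneOn hodd hα hx hxα hz).1
    exact (hzα.trans (le_sub_div_add_of_le_one hgα hCK0 hCK1)).not_gt hbig
  obtain rfl : z = g x := by rwa [subdiffH_of_lt hα hαx] at hz
  rcases le_or_gt x' α with hx'α | hx'α
  · rw [← mul_assoc]
    exact mul_lt_mul_of_pos_right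
      (mul_sub_lt_sub_of_mem_subdiffH_of_le h𝒞 hg.monotoneOn hodd hα hCK0 hCK1 hbig hx' hx'α hz')
      (sub_pos.2 (hx'α.trans_lt hαx))
  · obtain rfl : z' = g x' := by rwa [subdiffH_of_lt hα hx'α] at hz'
    exact mul_lt_of_lt_one_left (sub_mul_sub_pos_of_strictMonoOn hg hx hx' hne)
      (sub_lt_self 1 hCK0)

end subdiffH

theorem stmt6_general {𝒞 : Set ℝ} (h𝒞 : 𝒞 = Set.univ ∨ 𝒞 = Set.Ici 0) {g : ℝ → ℝ} {α CK : ℝ}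
    (hα : 0 ≤ α) (hCK0 : 0 < CK) (hCK1 : CK ≤ 1) (hg : StrictMonoOn g 𝒞)
    (hodd : 𝒞 = Set.univ → ∀ t, g (-t) = -g t) (hnn : 𝒞 = Set.Ici 0 → 0 ≤ g 0)
    {x z : ℝ} (hx : x ∈ 𝒞) (hz : z ∈ subdiffH 𝒞 g α x)
    (hbig : (g α - g 0) / CK + g 0 < |z|) {x' : ℝ} (hx' : x' ∈ 𝒞) (hne : x' ≠ x)
    {z' : ℝ} (hz' : z' ∈ subdiffH 𝒞 g α x') :
    (1 - CK) * ((g x - g x') * (x - x')) < (z - z') * (x - x') := by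
  rcases h𝒞 with rfl | rfl
  · rcases lt_abs.1 hbig with hpos | hneg
    · exact mul_lt_mul_of_mem_subdiffH_of_lt (.inl rfl) hg hodd hα hCK0 hCK1 hx hz hpos hx' hne hz'
    · have hodd' := hodd rfl
      have hreflected := mul_lt_mul_of_mem_subdiffH_of_lt (.inl rfl) hg hodd hα hCK0 hCK1 trivial
        (neg_mem_subdiffH_univ hodd' hz) hneg trivial (neg_injective.ne hne)
        (neg_mem_subdiffH_univ hodd' hz')
      rw [hodd', hodd'] at hreflected
      linarith
  · rw [abs_of_nonneg (nonneg_of_mem_subdiffH_Ici hg.monotoneOn (hnn rfl) hα hx hz)] at hbig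
    exact mul_lt_mul_of_mem_subdiffH_of_lt (.inr rfl) hg hodd hα hCK0 hCK1 hx hz hbig hx' hne hz'

/-- Lemma for large `|z|`. -/
theorem stmt6
    (𝒞 : Set ℝ) (h𝒞 : 𝒞 = Set.univ ∨ 𝒞 = Set.Ici 0)
    (ψ dψ : ℝ → ℝ) (α CK : ℝ) (hα : 0 < α) (hCK0 : 0 < CK) (hCK1 : CK < 1)
    -- `ψ` strictly convex with derivative `dψ` on `𝒞`, twice differentiable on `int 𝒞`
    (hconv : StrictConvexOn ℝ 𝒞 ψ)
    (hderiv : ∀ t ∈ 𝒞, HasDerivWithinAt ψ (dψ t) 𝒞 t)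
    (hderiv2 : ∀ t ∈ interior 𝒞, DifferentiableAt ℝ dψ t)
    -- coercivity of `t ↦ ψ'(t)t - ψ(t)`
    (hcoer : ∀ c : ℝ, ∃ R : ℝ, ∀ t ∈ 𝒞, R ≤ |t| → c ≤ dψ t * t - ψ t)
    -- `ψ'` odd when `𝒞 = ℝ`, `ψ'(0) ≥ 0` when `𝒞 = ℝ_{≥0}`
    (hodd : 𝒞 = Set.univ → ∀ t, dψ (-t) = -dψ t)
    (hnn : 𝒞 = Set.Ici 0 → 0 ≤ dψ 0)
    (x z : ℝ) (hx : x ∈ 𝒞) (hz : z ∈ subdiffH 𝒞 dψ α x)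
    (hzbig : |z| > (dψ α - dψ 0) / CK + dψ 0) :
    ∀ x' ∈ 𝒞, x' ≠ x → ∀ z' ∈ subdiffH 𝒞 dψ α x',
      (1 - CK) * ((dψ x - dψ x') * (x - x')) < (z - z') * (x - x') := by
  have hmono := strictMonoOn_of_strictConvexOn_of_hasDerivWithinAt hconv hderiv
  exact fun _ hx' hne _ hz' =>
    stmt6_general h𝒞 hα.le hCK0 hCK1.le hmono hodd hnn hx hz hzbig hx' hne hz'
end
end

section
/- Under the oracle setting, assume F := G_y(A·) satisfies the BRSC property with respect to Ψ, a compact convex set X containing both x^or and x*, and K ≥ 2k*, with constant C_K > 0. Then the oracle solution belongs to the set 𝔖 := {u ∈ C^{k*} : F_{σ*}(u*) ≥ C_K · Σ_{j=1}^{k*} d_{ψ_{σ*[j]}}(u*_j, u_j)}; that is, Σ_{j=1}^{k*} d_{ψ_{σ*[j]}}(u*_j, u^or_j) ≤ F_{σ*}(u*)/C_K. -/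
open Classical

noncomputable section

/-- one-dimensional Bregman divergence `d_ψ(x, x') = ψ(x) - ψ(x') - ψ'(x')(x - x')`,
with the derivative `dψ` of `ψ` given as data. -/
def dBreg (ψ dψ : ℝ → ℝ) (x x' : ℝ) : ℝ := ψ x - ψ x' - dψ x' * (x - x')

/-- The data-fidelity setting of the paper (Assumption 1.3): a separable fidelity term
`G_y(w) = Σ_j g_j(w_j)` where each `g j` is nonnegative, strictly convex, twice
differentiable on the interior of its domain, with an `L`-Lipschitz derivative `dg j`;
a matrix `A`; and the constraint set `𝒞` equal to `ℝ` or `ℝ_{≥0}`. -/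
structure FidSetting (M N : ℕ) where
  𝒞 : Set ℝ
  h𝒞 : 𝒞 = Set.univ ∨ 𝒞 = Set.Ici 0
  A : Matrix (Fin M) (Fin N) ℝ
  domg : Fin M → Set ℝ
  g : Fin M → ℝ → ℝ
  dg : Fin M → ℝ → ℝ
  L : ℝ
  hL : 0 < L
  hdom : ∀ x : Fin N → ℝ, (∀ i, x i ∈ 𝒞) → ∀ j, (A.mulVec x) j ∈ interior (domg j)
  hg_nonneg : ∀ j, ∀ w ∈ domg j, 0 ≤ g j w
  hg_sconv : ∀ j, StrictConvexOn ℝ (domg j) (g j)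
  hg_deriv : ∀ j, ∀ w ∈ interior (domg j), HasDerivAt (g j) (dg j w) w
  hg_deriv2 : ∀ j, ∀ w ∈ interior (domg j), DifferentiableAt ℝ (dg j) w
  hg_lip : ∀ j, ∀ w ∈ domg j, ∀ v ∈ domg j, |dg j w - dg j v| ≤ L * |w - v|

/-- the feasible set `𝒞^N`. -/
def FidSetting.feas {M N : ℕ} (S : FidSetting M N) : Set (Fin N → ℝ) :=
  {x | ∀ i, x i ∈ S.𝒞}

/-- the data term `F(x) = G_y(Ax)`. -/
def FidSetting.F {M N : ℕ} (S : FidSetting M N) (x : Fin N → ℝ) : ℝ :=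
  ∑ j, S.g j (S.A.mulVec x j)

/-- the gradient `∇F(x) = Aᵀ ∇G_y(Ax)`. -/
def FidSetting.gradF {M N : ℕ} (S : FidSetting M N) (x : Fin N → ℝ) : Fin N → ℝ :=
  fun i => ∑ j, S.A j i * S.dg j (S.A.mulVec x j)

/-- the Bregman-generating setting (Definition 3.1 of the paper): `Ψ(x) = Σ_i ψ_i(x_i)`
with each `ψ_i` strictly convex, twice differentiable, `t ↦ ψ_i'(t)t - ψ_i(t)` coercive,
and `ψ_i'` odd when `𝒞 = ℝ` (resp. `ψ_i'(0) ≥ 0` when `𝒞 = ℝ_{≥0}`). -/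
structure PsiSetting (N : ℕ) (𝒞 : Set ℝ) where
  ψ : Fin N → ℝ → ℝ
  dψ : Fin N → ℝ → ℝ
  hconv : ∀ i, StrictConvexOn ℝ 𝒞 (ψ i)
  hderiv : ∀ i, ∀ t ∈ 𝒞, HasDerivWithinAt (ψ i) (dψ i t) 𝒞 t
  hderiv2 : ∀ i, ∀ t ∈ interior 𝒞, DifferentiableAt ℝ (dψ i) t
  hcoer : ∀ i, ∀ c : ℝ, ∃ R : ℝ, ∀ t ∈ 𝒞, R ≤ |t| → c ≤ dψ i t * t - ψ i t
  hodd : 𝒞 = Set.univ → ∀ i t, dψ i (-t) = -(dψ i t)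
  hnn : 𝒞 = Set.Ici 0 → ∀ i, 0 ≤ dψ i 0

/-- `∇Ψ(x)`. -/
def PsiSetting.gradPsi {N : ℕ} {𝒞 : Set ℝ} (P : PsiSetting N 𝒞) (x : Fin N → ℝ) :
    Fin N → ℝ :=
  fun i => P.dψ i (x i)

/-- the scalar B-rex penalty `β_{ψ_i}`. -/
def betaPen {N : ℕ} {𝒞 : Set ℝ} (P : PsiSetting N 𝒞) (α : Fin N → ℝ) (lam0 : ℝ)
    (i : Fin N) (t : ℝ) : ℝ :=
  if |t| ≤ α i then P.ψ i 0 - P.ψ i t + Real.sign t * P.dψ i (α i) * t else lam0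

/-- the relaxed objective `J_Ψ(x) = G_y(Ax) + B_Ψ(x)`. -/
def JPsi {M N : ℕ} (S : FidSetting M N) (P : PsiSetting N S.𝒞) (α : Fin N → ℝ) (lam0 : ℝ)
    (x : Fin N → ℝ) : ℝ :=
  S.F x + ∑ i, betaPen P α lam0 i (x i)

/-- the `ℓ₀`-regularized objective `J₀(x) = G_y(Ax) + λ₀‖x‖₀`. -/
def J0 {M N : ℕ} (S : FidSetting M N) (lam0 : ℝ) (x : Fin N → ℝ) : ℝ :=
  S.F x + lam0 * (norm0 x : ℝ)

/-- `z(x) = ∇Ψ(x) - Aᵀ∇G_y(Ax)`. -/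
def zmap {M N : ℕ} (S : FidSetting M N) (P : PsiSetting N S.𝒞) (x : Fin N → ℝ) :
    Fin N → ℝ :=
  fun i => P.dψ i (x i) - S.gradF x i

/-- `x ∈ 𝒞^N` is a critical point of `J_Ψ` iff `z_i(x) ∈ ∂h_i(x_i)` for every `i`. -/
def IsCritical {M N : ℕ} (S : FidSetting M N) (P : PsiSetting N S.𝒞) (α : Fin N → ℝ)
    (x : Fin N → ℝ) : Prop :=
  x ∈ S.feas ∧ ∀ i, zmap S P x i ∈ subdiffH S.𝒞 (P.dψ i) (α i) (x i)

/-- `F = G_y(A·)` satisfies BRSC with respect to `Ψ`, `X`, `K`, with constant `CK`. -/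
def BRSCholds {M N : ℕ} (S : FidSetting M N) (P : PsiSetting N S.𝒞)
    (X : Set (Fin N → ℝ)) (K : ℕ) (CK : ℝ) : Prop :=
  ∀ x ∈ X, ∀ x' ∈ S.feas, x ≠ x' → norm0 (x - x') ≤ K →
    CK * dotp (P.gradPsi x - P.gradPsi x') (x - x')
      ≤ dotp (S.gradF x - S.gradF x') (x - x')

/-- the support of a vector, as a `Finset`. -/
def suppF {N : ℕ} (x : Fin N → ℝ) : Finset (Fin N) := Finset.univ.filter fun i => x i ≠ 0

/-- zero padding operator: entries indexed by `σ` equal those of `u`, others are `0`. -/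
def zpad {N : ℕ} (σ : Finset (Fin N)) (u : {i // i ∈ σ} → ℝ) : Fin N → ℝ :=
  fun i => if h : i ∈ σ then u ⟨i, h⟩ else 0

/-- the restricted data term `F_σ(u) = G_y(A_σ u)`. -/
def Fres {M N : ℕ} (S : FidSetting M N) (σ : Finset (Fin N)) (u : {i // i ∈ σ} → ℝ) : ℝ :=
  S.F (zpad σ u)

/-! Restricted to the segment from `x^or` to `x*`, the functions `F` and `Ψ` depend on one real
variable. All differences of points of this segment are supported on `σ*`, so BRSC compares
the growth of the two derivatives from `x^or` on, and the mean value theorem turns this into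
`C_K · D_Ψ(x*, x^or) ≤ D_F(x*, x^or)`. First-order optimality of `x^or` gives
`D_F(x*, x^or) ≤ F(x*) - F(x^or)`, and `F(x^or) ≥ 0`. -/

open Set AffineMap

theorem mul_dBreg_le_dBreg_of_deriv_sub_le {f f' φ φ' : ℝ → ℝ} {a b C : ℝ} (hab : a < b)
    (hf : ∀ t ∈ Icc a b, HasDerivWithinAt f (f' t) (Icc a b) t)
    (hφ : ∀ t ∈ Icc a b, HasDerivWithinAt φ (φ' t) (Icc a b) t)
    (hle : ∀ t ∈ Ioo a b, C * (φ' t - φ' a) ≤ f' t - f' a) :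
    C * dBreg φ φ' b a ≤ dBreg f f' b a := by
  have hderiv : ∀ t ∈ Icc a b,
      HasDerivWithinAt (fun s => f s - C * φ s) (f' t - C * φ' t) (Icc a b) t :=
    fun t ht => (hf t ht).sub ((hφ t ht).const_mul C)
  obtain ⟨c, hc, hslope⟩ := exists_hasDerivAt_eq_slope (fun s => f s - C * φ s)
    (fun t => f' t - C * φ' t) hab (fun t ht => (hderiv t ht).continuousWithinAt)
    (fun t ht => (hderiv t (Ioo_subset_Icc_self ht)).hasDerivAt (Icc_mem_nhds ht.1 ht.2))
  rw [eq_div_iff (sub_pos.2 hab).ne'] at hslope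
  have hgrowth : (f' a - C * φ' a) * (b - a) ≤ (f' c - C * φ' c) * (b - a) :=
    mul_le_mul_of_nonneg_right (by linarith [hle c hc]) (sub_pos.2 hab).le
  simp only [dBreg]
  linarith

section Vectors

variable {ι : Type*} [Fintype ι]

theorem dotp_eq_dotProduct (x y : ι → ℝ) : dotp x y = x ⬝ᵥ y := rfl

theorem norm0_le_card {x : ι → ℝ} {σ : Finset ι} (hx : ∀ i ∉ σ, x i = 0) :
    norm0 x ≤ σ.card := by
  refine Finset.card_le_card fun i hi => ?_
  by_contra hiσ
  exact (Finset.mem_filter.1 hi).2 (hx i hiσ)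

theorem norm0_smul_le (t : ℝ) (x : ι → ℝ) : norm0 (t • x) ≤ norm0 x :=
  Finset.card_le_card <| Finset.monotone_filter_right _ fun _ _ => right_ne_zero_of_mul

/-- The Bregman divergence `D_Φ(x, x') = Φ(x) - Φ(x') - ⟨∇Φ(x'), x - x'⟩` of a function of several
variables, with the gradient of `Φ` given as data, as in `dBreg`. -/
def bregman (Φ : (ι → ℝ) → ℝ) (gradΦ : (ι → ℝ) → ι → ℝ) (x x' : ι → ℝ) : ℝ :=
  Φ x - Φ x' - dotp (gradΦ x') (x - x')

theorem dBreg_comp_lineMap (Φ : (ι → ℝ) → ℝ) (gradΦ : (ι → ℝ) → ι → ℝ) (x x' : ι → ℝ) :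
    dBreg (fun t => Φ (lineMap x' x t)) (fun t => dotp (gradΦ (lineMap x' x t)) (x - x')) 1 0 =
      bregman Φ gradΦ x x' := by
  simp [dBreg, bregman]

end Vectors

section ZeroPadding

variable {N : ℕ} {σ : Finset (Fin N)}

theorem zpad_coe (u : {i // i ∈ σ} → ℝ) (j : {i // i ∈ σ}) : zpad σ u j = u j := by
  simp [zpad]

theorem zpad_of_notMem (u : {i // i ∈ σ} → ℝ) {i : Fin N} (hi : i ∉ σ) : zpad σ u i = 0 := by
  simp [zpad, hi]

theorem zpad_restrict {x : Fin N → ℝ} (hx : ∀ i ∉ σ, x i = 0) :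
    zpad σ (fun j => x j) = x := by
  funext i
  by_cases hi : i ∈ σ
  · exact zpad_coe _ ⟨i, hi⟩
  · rw [zpad_of_notMem _ hi, hx i hi]

end ZeroPadding

namespace PsiSetting

variable {N : ℕ} {𝒞 : Set ℝ} (P : PsiSetting N 𝒞)

/-- The separable function `Ψ(x) = Σ_i ψ_i(x_i)`, with gradient `PsiSetting.gradPsi`. -/
def Psi (x : Fin N → ℝ) : ℝ := ∑ i, P.ψ i (x i)

theorem hasDerivWithinAt_Psi_comp {γ : ℝ → Fin N → ℝ} {γ' : Fin N → ℝ} {s : Set ℝ} {t : ℝ}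
    (hγ : HasDerivWithinAt γ γ' s t) (hmem : ∀ r ∈ s, ∀ i, γ r i ∈ 𝒞) (ht : t ∈ s) :
    HasDerivWithinAt (fun r => P.Psi (γ r)) (dotp (P.gradPsi (γ t)) γ') s t :=
  HasDerivWithinAt.fun_sum fun i _ =>
    (P.hderiv i _ (hmem t ht i)).comp t (hasDerivWithinAt_pi.1 hγ i) fun r hr => hmem r hr i

theorem bregman_Psi (x x' : Fin N → ℝ) :
    bregman P.Psi P.gradPsi x x' = ∑ i, dBreg (P.ψ i) (P.dψ i) (x i) (x' i) := by
  simp only [bregman, Psi, dotp, gradPsi, dBreg, Pi.sub_apply, Finset.sum_sub_distrib]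

theorem bregman_Psi_zpad {σ : Finset (Fin N)} (u v : {i // i ∈ σ} → ℝ) :
    bregman P.Psi P.gradPsi (zpad σ u) (zpad σ v) =
      ∑ j : {i // i ∈ σ}, dBreg (P.ψ j) (P.dψ j) (u j) (v j) := by
  have hoff : ∀ i ∉ σ, dBreg (P.ψ i) (P.dψ i) (zpad σ u i) (zpad σ v i) = 0 := fun i hi => by
    simp [dBreg, zpad_of_notMem _ hi]
  rw [bregman_Psi, ← Finset.sum_subset σ.subset_univ fun i _ hi => hoff i hi, ← σ.sum_coe_sort]
  simp only [zpad_coe]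

end PsiSetting

namespace FidSetting

variable {M N : ℕ} (S : FidSetting M N)

theorem dotp_gradF (x d : Fin N → ℝ) :
    dotp (S.gradF x) d = ∑ j, S.dg j (S.A.mulVec x j) * S.A.mulVec d j := by
  have hgradF : S.gradF x = S.A.transpose.mulVec fun j => S.dg j (S.A.mulVec x j) := rfl
  rw [hgradF, dotp_eq_dotProduct, Matrix.mulVec_transpose, ← Matrix.dotProduct_mulVec, dotProduct]

theorem hasDerivWithinAt_F_comp {γ : ℝ → Fin N → ℝ} {γ' : Fin N → ℝ} {s : Set ℝ} {t : ℝ}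
    (hγ : HasDerivWithinAt γ γ' s t) (hmem : γ t ∈ S.feas) :
    HasDerivWithinAt (fun r => S.F (γ r)) (dotp (S.gradF (γ t)) γ') s t := by
  have hmulVec : ∀ j,
      HasDerivWithinAt (fun r => S.A.mulVec (γ r) j) (S.A.mulVec γ' j) s t := fun j => by
    simp only [Matrix.mulVec, dotProduct]
    exact HasDerivWithinAt.fun_sum fun i _ => (hasDerivWithinAt_pi.1 hγ i).const_mul (S.A j i)
  rw [dotp_gradF]
  exact HasDerivWithinAt.fun_sum fun j _ =>
    (S.hg_deriv j _ (S.hdom _ hmem j)).comp_hasDerivWithinAt t (hmulVec j)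

theorem F_nonneg {x : Fin N → ℝ} (hx : x ∈ S.feas) : 0 ≤ S.F x :=
  Finset.sum_nonneg fun j _ => S.hg_nonneg j _ (interior_subset (S.hdom x hx j))

theorem convex_feas : Convex ℝ S.feas := by
  have hconv : Convex ℝ S.𝒞 := by
    rcases S.h𝒞 with h | h <;> rw [h]
    exacts [convex_univ, convex_Ici 0]
  exact fun x hx y hy a b ha hb hab i => hconv (hx i) (hy i) ha hb hab

theorem dotp_gradF_sub_nonneg_of_isMinOn {s : Set (Fin N → ℝ)} {x x' : Fin N → ℝ}
    (hs : Convex ℝ s) (hsf : s ⊆ S.feas) (hx : x ∈ s) (hx' : x' ∈ s) (hmin : IsMinOn S.F s x') :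
    0 ≤ dotp (S.gradF x') (x - x') := by
  have hmaps : MapsTo (lineMap x' x) (Icc (0 : ℝ) 1) s := hs.mapsTo_lineMap hx' hx
  have hmin_line : IsMinOn (fun t : ℝ => S.F (lineMap x' x t)) (Icc 0 1) 0 := fun t ht => by
    simpa using hmin (hmaps ht)
  have hderiv : HasDerivWithinAt (fun t : ℝ => S.F (lineMap x' x t))
      (dotp (S.gradF x') (x - x')) (Icc 0 1) 0 := by
    simpa using S.hasDerivWithinAt_F_comp (s := Icc 0 1) (t := 0) hasDerivWithinAt_lineMap
      (by simpa using hsf hx')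
  have hcone : (1 : ℝ) ∈ posTangentConeAt (Icc 0 1) (0 : ℝ) :=
    mem_posTangentConeAt_of_segment_subset (by simp [segment_eq_Icc])
  simpa using hmin_line.localize.hasFDerivWithinAt_nonneg hderiv.hasFDerivWithinAt hcone

/-- The feasible vectors that vanish outside `σ`, on which `F` is the full-dimensional counterpart
of `F_σ` on `𝒞^σ`. -/
def feasOn (σ : Finset (Fin N)) : Set (Fin N → ℝ) :=
  {x ∈ S.feas | ∀ i ∉ σ, x i = 0}

theorem convex_feasOn (σ : Finset (Fin N)) : Convex ℝ (S.feasOn σ) :=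
  fun x hx y hy a b ha hb hab =>
    ⟨S.convex_feas hx.1 hy.1 ha hb hab, fun i hi => by simp [hx.2 i hi, hy.2 i hi]⟩

theorem isMinOn_feasOn_zpad {σ : Finset (Fin N)} {u : {i // i ∈ σ} → ℝ}
    (hmin : ∀ v : {i // i ∈ σ} → ℝ, (∀ j, v j ∈ S.𝒞) → Fres S σ u ≤ Fres S σ v) :
    IsMinOn S.F (S.feasOn σ) (zpad σ u) := fun x hx => by
  simpa only [Fres, zpad_restrict hx.2, mem_ofPred_eq] using hmin (fun j => x j) fun j => hx.1 j

end FidSetting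

namespace BRSCholds

variable {M N : ℕ} {S : FidSetting M N} {P : PsiSetting N S.𝒞} {X : Set (Fin N → ℝ)} {K : ℕ}
  {C : ℝ} {x x' : Fin N → ℝ}

theorem mul_dotp_le (h : BRSCholds S P X K C) (hx : x ∈ X) (hx' : x' ∈ S.feas)
    (hK : norm0 (x - x') ≤ K) :
    C * dotp (P.gradPsi x - P.gradPsi x') (x - x') ≤
      dotp (S.gradF x - S.gradF x') (x - x') := by
  rcases eq_or_ne x x' with rfl | hne
  · simp [dotp]
  · exact h x hx x' hx' hne hK

theorem mul_dotp_sub_le_of_lineMap_mem (h : BRSCholds S P X K C) (hx' : x' ∈ S.feas)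
    (hK : norm0 (x - x') ≤ K) {t : ℝ} (ht : 0 < t) (hmem : lineMap x' x t ∈ X) :
    C * (dotp (P.gradPsi (lineMap x' x t)) (x - x') - dotp (P.gradPsi x') (x - x')) ≤
      dotp (S.gradF (lineMap x' x t)) (x - x') - dotp (S.gradF x') (x - x') := by
  have hdiff : lineMap x' x t - x' = t • (x - x') := lineMap_vsub_left x' x t
  have hle := h.mul_dotp_le hmem hx' (hdiff ▸ (norm0_smul_le t (x - x')).trans hK)
  simp only [hdiff, dotp_eq_dotProduct, dotProduct_smul, sub_dotProduct, smul_eq_mul] at hle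
  refine le_of_mul_le_mul_left ?_ ht
  simp only [dotp_eq_dotProduct]
  linarith

theorem mul_bregman_le_bregman (h : BRSCholds S P X K C) (hXconv : Convex ℝ X)
    (hXfeas : X ⊆ S.feas) (hx : x ∈ X) (hx' : x' ∈ X) (hK : norm0 (x - x') ≤ K) :
    C * bregman P.Psi P.gradPsi x x' ≤ bregman S.F S.gradF x x' := by
  have hmaps : MapsTo (lineMap x' x) (Icc (0 : ℝ) 1) X := hXconv.mapsTo_lineMap hx' hx
  rw [← dBreg_comp_lineMap, ← dBreg_comp_lineMap]
  refine mul_dBreg_le_dBreg_of_deriv_sub_le zero_lt_one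
    (fun t ht => S.hasDerivWithinAt_F_comp hasDerivWithinAt_lineMap (hXfeas (hmaps ht)))
    (fun t ht => P.hasDerivWithinAt_Psi_comp hasDerivWithinAt_lineMap
      (fun r hr => hXfeas (hmaps hr)) ht)
    fun t ht => ?_
  simpa only [lineMap_apply_zero] using
    h.mul_dotp_sub_le_of_lineMap_mem (hXfeas hx') hK ht.1 (hmaps (Ioo_subset_Icc_self ht))

theorem mul_bregman_le_sub_of_isMinOn (h : BRSCholds S P X K C) (hXconv : Convex ℝ X)
    (hXfeas : X ⊆ S.feas) (hx : x ∈ X) (hx' : x' ∈ X) (hK : norm0 (x - x') ≤ K)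
    {s : Set (Fin N → ℝ)} (hs : Convex ℝ s) (hsf : s ⊆ S.feas) (hxs : x ∈ s) (hxs' : x' ∈ s)
    (hmin : IsMinOn S.F s x') :
    C * bregman P.Psi P.gradPsi x x' ≤ S.F x - S.F x' :=
  (h.mul_bregman_le_bregman hXconv hXfeas hx hx' hK).trans <|
    sub_le_self _ (S.dotp_gradF_sub_nonneg_of_isMinOn hs hsf hxs hxs' hmin)

end BRSCholds

theorem stmt12_general {M N : ℕ} (S : FidSetting M N) (P : PsiSetting N S.𝒞)
    {σ : Finset (Fin N)} {xstar : Fin N → ℝ} (hxstar_off : ∀ i ∉ σ, xstar i = 0)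
    {uor : {i // i ∈ σ} → ℝ}
    (huor_min : ∀ u : {i // i ∈ σ} → ℝ, (∀ j, u j ∈ S.𝒞) → Fres S σ uor ≤ Fres S σ u)
    {X : Set (Fin N → ℝ)} (hXfeas : X ⊆ S.feas) (hXconv : Convex ℝ X)
    (hXor : zpad σ uor ∈ X) (hXstar : xstar ∈ X)
    {K : ℕ} (hK : σ.card ≤ K) {CK : ℝ} (hCK : 0 < CK) (hBRSC : BRSCholds S P X K CK) :
    ∑ j : {i // i ∈ σ}, dBreg (P.ψ j) (P.dψ j) (xstar j) (uor j) ≤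
      Fres S σ (fun j => xstar j) / CK := by
  have hor_off : ∀ i ∉ σ, zpad σ uor i = 0 := fun i hi => zpad_of_notMem uor hi
  have hsparse : norm0 (xstar - zpad σ uor) ≤ K :=
    (norm0_le_card fun i hi => by simp [hxstar_off i hi, hor_off i hi]).trans hK
  have hgap := hBRSC.mul_bregman_le_sub_of_isMinOn hXconv hXfeas hXstar hXor hsparse
    (S.convex_feasOn σ) (fun _ hx => hx.1) ⟨hXfeas hXstar, hxstar_off⟩ ⟨hXfeas hXor, hor_off⟩
    (S.isMinOn_feasOn_zpad huor_min)
  rw [← P.bregman_Psi_zpad, le_div_iff₀' hCK, Fres, zpad_restrict hxstar_off]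
  exact hgap.trans (sub_le_self _ (S.F_nonneg (hXfeas hXor)))

/-- Proposition 4.5: the oracle solution lies in the safe oracle region `𝔖`. -/
theorem stmt12 {M N : ℕ} (S : FidSetting M N) (P : PsiSetting N S.𝒞)
    -- the oracle setting: `x*`, its support, full column rank of `A_{σ*}`,
    -- and the oracle solution `u^or` (the unique minimizer of `F_{σ*}` over `𝒞^{k*}`)
    (xstar : Fin N → ℝ) (hxstar : xstar ∈ S.feas) (hσne : (suppF xstar).Nonempty)
    (hrank : LinearIndependent ℝ fun i : {i // i ∈ suppF xstar} => fun j : Fin M => S.A j i.1)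
    (uor : {i // i ∈ suppF xstar} → ℝ)
    (huor_feas : ∀ j, uor j ∈ S.𝒞)
    (huor_min : ∀ u : {i // i ∈ suppF xstar} → ℝ, (∀ j, u j ∈ S.𝒞) →
      Fres S (suppF xstar) uor ≤ Fres S (suppF xstar) u)
    (huor_uniq : ∀ u : {i // i ∈ suppF xstar} → ℝ, (∀ j, u j ∈ S.𝒞) →
      Fres S (suppF xstar) u ≤ Fres S (suppF xstar) uor → u = uor)
    -- BRSC w.r.t. `Ψ`, a compact convex `X` containing `x^or` and `x*`, and `K ≥ 2k*`
    (X : Set (Fin N → ℝ)) (hXfeas : X ⊆ S.feas) (hXcomp : IsCompact X) (hXconv : Convex ℝ X)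
    (hXor : zpad (suppF xstar) uor ∈ X) (hXstar : xstar ∈ X)
    (K : ℕ) (hK : 2 * (suppF xstar).card ≤ K) (CK : ℝ) (hCK : 0 < CK)
    (hBRSC : BRSCholds S P X K CK)
 :
    ∑ j : {i // i ∈ suppF xstar}, dBreg (P.ψ j.1) (P.dψ j.1) (xstar j.1) (uor j)
      ≤ Fres S (suppF xstar) (fun j => xstar j.1) / CK := by
  have hxstar_off : ∀ i ∉ suppF xstar, xstar i = 0 := by simp [suppF]
  exact stmt12_general S P hxstar_off huor_min hXfeas hXconv hXor hXstar (by omega) hCK hBRSC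
end
end

section
/- Let δ ∈ [0,1), m > 0, e ≥ 0, and λ₀ > 0 satisfy e²/(2(1−δ)²) < λ₀ < ((1−δ)²/(2(2−δ)²))·m². Then λ₀ < ((1−δ)²/2)·(m − e/√(1−δ))². In particular, the interval of regularization parameters from Carlsson–Gerosa (2020) is contained in the interval (‖ε‖₂²/(2(1−δ)²), ((1−δ)²/2)(min_{i∈σ*}|x*_i| − ‖ε‖₂/√(1−δ))²) derived in this paper, with m = min_{i∈σ*}|x*_i| and e = ‖ε‖₂. -/
noncomputable section

/- Write `a = 1 - δ ∈ (0, 1]`. Comparing the two ends of the Carlsson--Gerosa interval gives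
`|e| / a < a |m| / (1 + a)`, and `|m| / (1 + a)` is exactly what is left of `|m|` after removing
`a |m| / (1 + a)`. Since `a ≤ √a`, removing the smaller amount `|e| / √a` leaves at least as much,
so `|m - e / √a| ≥ |m| / (1 + a)`. -/

section LinearOrderedField

variable {K : Type*} [Field K] [LinearOrder K] [IsStrictOrderedRing K] {a b c e m s : K}

theorem sq_div_two_mul_sq_lt_iff_abs_div_lt_abs_mul_div :
    e ^ 2 / (2 * a ^ 2) < b ^ 2 / (2 * c ^ 2) * m ^ 2 ↔ |e / a| < |b * m / c| := by
  have left_eq : e ^ 2 / (2 * a ^ 2) = (e / a) ^ 2 / 2 := by ring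
  have right_eq : b ^ 2 / (2 * c ^ 2) * m ^ 2 = (b * m / c) ^ 2 / 2 := by ring
  rw [left_eq, right_eq, div_lt_div_iff_of_pos_right two_pos, sq_lt_sq]

theorem abs_div_one_add_eq_abs_sub (ha : 0 ≤ a) :
    |m / (1 + a)| = |m| - |a * m / (1 + a)| := by
  have one_add_pos : 0 < 1 + a := by positivity
  rw [abs_div, abs_div, abs_mul, abs_of_nonneg ha, abs_of_pos one_add_pos]
  field_simp
  ring

theorem abs_div_le_abs_div_of_le (ha : 0 < a) (has : a ≤ s) : |e / s| ≤ |e / a| := by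
  rw [abs_div, abs_div, abs_of_pos ha, abs_of_pos (ha.trans_le has)]
  gcongr

theorem abs_div_one_add_le_abs_sub_div (ha : 0 < a) (has : a ≤ s)
    (he : |e / a| ≤ |a * m / (1 + a)|) : |m / (1 + a)| ≤ |m - e / s| :=
  calc
    |m / (1 + a)| = |m| - |a * m / (1 + a)| := abs_div_one_add_eq_abs_sub ha.le
    _ ≤ |m| - |e / s| := sub_le_sub_left ((abs_div_le_abs_div_of_le ha has).trans he) _
    _ ≤ |m - e / s| := abs_sub_abs_le_abs_sub _ _

end LinearOrderedField

theorem stmt18_general (δ m e lam0 : ℝ) (hδ0 : 0 ≤ δ) (hδ1 : δ < 1)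
    (h1 : e ^ 2 / (2 * (1 - δ) ^ 2) < lam0)
    (h2 : lam0 < (1 - δ) ^ 2 / (2 * (2 - δ) ^ 2) * m ^ 2) :
    lam0 < (1 - δ) ^ 2 / 2 * (m - e / Real.sqrt (1 - δ)) ^ 2 := by
  have two_sub_eq : 2 - δ = 1 + (1 - δ) := by ring
  rw [two_sub_eq] at h2
  have one_sub_le_sqrt : 1 - δ ≤ √(1 - δ) := Real.le_sqrt_self_iff.mpr (sub_le_self 1 hδ0)
  have abs_div_lt : |e / (1 - δ)| < |(1 - δ) * m / (1 + (1 - δ))| :=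
    sq_div_two_mul_sq_lt_iff_abs_div_lt_abs_mul_div.mp (h1.trans h2)
  have abs_div_le : |m / (1 + (1 - δ))| ≤ |m - e / √(1 - δ)| :=
    abs_div_one_add_le_abs_sub_div (sub_pos.mpr hδ1) one_sub_le_sqrt abs_div_lt.le
  calc
    lam0 < (1 - δ) ^ 2 / (2 * (1 + (1 - δ)) ^ 2) * m ^ 2 := h2
    _ = (1 - δ) ^ 2 / 2 * (m / (1 + (1 - δ))) ^ 2 := by rw [div_pow, ← div_div]; ring
    _ ≤ (1 - δ) ^ 2 / 2 * (m - e / √(1 - δ)) ^ 2 :=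
      mul_le_mul_of_nonneg_left (sq_le_sq.mpr abs_div_le) (by positivity)

/-- the interval of regularization parameters of Carlsson--Gerosa (2020) is
contained in the interval derived in the paper (with `m = min_{i∈σ*}|x*_i|`, `e = ‖ε‖₂`). -/
theorem stmt18 (δ m e lam0 : ℝ) (hδ0 : 0 ≤ δ) (hδ1 : δ < 1) (hm : 0 < m) (he : 0 ≤ e)
    (h1 : e ^ 2 / (2 * (1 - δ) ^ 2) < lam0)
    (h2 : lam0 < (1 - δ) ^ 2 / (2 * (2 - δ) ^ 2) * m ^ 2) :
    lam0 < (1 - δ) ^ 2 / 2 * (m - e / Real.sqrt (1 - δ)) ^ 2 :=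
  stmt18_general δ m e lam0 hδ0 hδ1 h1 h2
end
end
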